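/- arXiv:2602.15472 — 2 statements merged into one kernel-verified Lean document; each statement's English description precedes it below -/
import Mathlib

section
/- Let d ≥ 1 and ε > 0. The function f : ℝᵈ → ℝ defined by f(x) = exp(−ε‖x‖) · (3 + 3ε‖x‖ + (ε‖x‖)²), where ‖·‖ is the Euclidean norm, is four times continuously differentiable on all of ℝᵈ (i.e., f is of class C⁴, including at the origin). -/
open Filter Topology in
theorem matern_rad {E : Type*} [NormedAddCommGroup E] [InnerProductSpace ℝ E]
    (φ ψ : ℝ → ℝ) (h : ∀ r, HasDerivAt φ (ψ r * r) r) (x : E) :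
    HasFDerivAt (fun x : E => φ ‖x‖) (ψ ‖x‖ • innerSL ℝ x) x := by
  by_cases hx : x = 0
  · subst hx
    have h0 := (h 0).isLittleO
    simp only [mul_zero, smul_zero, sub_zero] at h0
    have ht : Tendsto (fun y : E => ‖y‖) (𝓝 0) (𝓝 0) := by
      simpa using (continuous_norm (E := E)).tendsto 0
    have h1 := h0.comp_tendsto ht
    refine HasFDerivAt.of_isLittleO ?_
    have h3 : (fun x : E => φ ‖x‖ - φ 0) =o[𝓝 0] (fun x : E => x) := by
      rw [← Asymptotics.isLittleO_norm_right]
      simpa [Function.comp_def] using h1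
    simpa using h3
  · have hn : ‖x‖ ≠ 0 := norm_ne_zero_iff.2 hx
    have h1 : HasFDerivAt (fun x : E => ‖x‖) (‖x‖⁻¹ • innerSL ℝ x) x := by
      have h2 := ((hasStrictFDerivAt_norm_sq x).hasFDerivAt).sqrt (by positivity)
      simp only [Real.sqrt_sq (norm_nonneg _)] at h2
      convert h2 using 1
      ext v
      simp
      field_simp
    have h3 := (h ‖x‖).comp_hasFDerivAt x h1
    refine h3.congr_fderiv ?_
    ext v
    simp only [ContinuousLinearMap.smul_apply, smul_eq_mul]
    field_simp

/-- Derivative at the origin of a continuous function times a linear function. -/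
theorem matern_zero {E : Type*} [NormedAddCommGroup E] [InnerProductSpace ℝ E]
    (A : E → ℝ) (hA : Continuous A) (v : E) :
    HasFDerivAt (fun x : E => A x * inner ℝ v x) (A 0 • innerSL ℝ v) 0 := by
  refine HasFDerivAt.of_isLittleO ?_
  have h1 : (fun x : E => A x - A 0) =o[nhds 0] (fun _ => (1 : ℝ)) := by
    rw [Asymptotics.isLittleO_one_iff]
    simpa using (hA.sub continuous_const).tendsto (0 : E) (f := fun x => A x - A 0)
  have h2 : (fun x : E => innerSL ℝ v x) =O[nhds 0] (fun x => x) :=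
    (innerSL ℝ v).isBigO_id _
  have h3 := (h1.mul_isBigO h2.norm_right).norm_right
  simp only [one_mul, norm_norm] at h3
  rw [Asymptotics.isLittleO_norm_right] at h3
  simpa [sub_mul] using h3

theorem matern_step {E : Type*} [NormedAddCommGroup E] [InnerProductSpace ℝ E]
    [FiniteDimensional ℝ E] (n : ℕ) (f : E → ℝ) (g : E → E → ℝ)
    (h : ∀ x, ∃ L : E →L[ℝ] ℝ, HasFDerivAt f L x ∧ ∀ v, L v = g v x)
    (hg : ∀ v, ContDiff ℝ n (g v)) : ContDiff ℝ (n + 1) f := by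
  rw [contDiff_succ_iff_fderiv_apply]
  refine ⟨fun x => ?_, by simp, fun v => ?_⟩
  · obtain ⟨L, hL, -⟩ := h x
    exact hL.differentiableAt
  · have : (fun x => fderiv ℝ f x v) = g v := by
      funext x
      obtain ⟨L, hL, h2⟩ := h x
      rw [hL.fderiv, h2]
    rw [this]
    exact hg v

theorem matern_div {E : Type*} [NormedAddCommGroup E] [InnerProductSpace ℝ E]
    (A : E → ℝ) (hA : Continuous A) (h0 : A 0 = 0) (v : E) :
    Continuous (fun x : E => A x * (inner ℝ v x / ‖x‖)) := by
  rw [continuous_iff_continuousAt]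
  intro x
  by_cases hx : x = 0
  · subst hx
    have hb : ∀ x : E, ‖A x * (inner ℝ v x / ‖x‖)‖ ≤ ‖A x‖ * ‖v‖ := by
      intro x
      rw [norm_mul]
      gcongr
      rw [norm_div, norm_norm]
      exact div_le_of_le_mul₀ (norm_nonneg _) (norm_nonneg _) (norm_inner_le_norm v x)
    have ht : Filter.Tendsto (fun x => ‖A x‖ * ‖v‖) (nhds (0 : E)) (nhds 0) := by
      have : Continuous (fun x => ‖A x‖ * ‖v‖) := by fun_prop
      simpa [h0] using this.tendsto 0
    have := squeeze_zero_norm hb ht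
    simpa [ContinuousAt, h0] using this
  · have : ‖x‖ ≠ 0 := norm_ne_zero_iff.2 hx
    fun_prop (disch := assumption)

theorem matern_exp {E : Type*} [NormedAddCommGroup E] [InnerProductSpace ℝ E]
    (ε : ℝ) (x : E) (hx : x ≠ 0) :
    HasFDerivAt (fun x : E => Real.exp (-(ε * ‖x‖)))
      ((-ε * Real.exp (-(ε * ‖x‖)) / ‖x‖) • innerSL ℝ x) x ∧
    HasFDerivAt (fun x : E => ‖x‖⁻¹) ((-(‖x‖⁻¹ ^ 3)) • innerSL ℝ x) x := by
  have hn : ‖x‖ ≠ 0 := norm_ne_zero_iff.2 hx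
  have h1 : HasFDerivAt (fun x : E => ‖x‖) (‖x‖⁻¹ • innerSL ℝ x) x := by
    have h2 := ((hasStrictFDerivAt_norm_sq x).hasFDerivAt).sqrt (by positivity)
    simp only [Real.sqrt_sq (norm_nonneg _)] at h2
    convert h2 using 1
    ext v
    simp
    field_simp
  constructor
  · refine (((h1.const_mul ε).neg).exp).congr_fderiv ?_
    ext v
    simp only [ContinuousLinearMap.smul_apply, ContinuousLinearMap.neg_apply, smul_eq_mul,
      Pi.neg_apply]
    ring
  · refine ((hasDerivAt_inv hn).comp_hasFDerivAt x h1).congr_fderiv ?_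
    ext v
    simp only [ContinuousLinearMap.smul_apply, smul_eq_mul]
    ring

section
variable {E : Type*} [NormedAddCommGroup E] [InnerProductSpace ℝ E]

theorem matern_cQ (ε : ℝ) (v : E) :
    Continuous (fun x : E => Real.exp (-(ε * ‖x‖)) * inner ℝ v x) := by fun_prop

theorem matern_cN (ε : ℝ) (v w : E) :
    Continuous (fun x : E => Real.exp (-(ε * ‖x‖)) * inner ℝ v x * (inner ℝ w x / ‖x‖)) :=
  matern_div _ (matern_cQ ε v) (by simp) w

theorem matern_dQ (ε : ℝ) (v x : E) : ∃ L : E →L[ℝ] ℝ,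
    HasFDerivAt (fun x : E => Real.exp (-(ε * ‖x‖)) * inner ℝ v x) L x ∧
    ∀ u, L u = Real.exp (-(ε * ‖x‖)) * inner ℝ v u
      - ε * (Real.exp (-(ε * ‖x‖)) * inner ℝ v x * (inner ℝ u x / ‖x‖)) := by
  by_cases hx : x = 0
  · subst hx
    exact ⟨_, matern_zero (fun x => Real.exp (-(ε * ‖x‖))) (by fun_prop) v, by simp⟩
  · refine ⟨_, (matern_exp ε x hx).1.mul (innerSL ℝ v).hasFDerivAt, fun u => ?_⟩
    simp [real_inner_comm u x]
    ring

theorem matern_dR (ε : ℝ) (v w z x : E) : ∃ L : E →L[ℝ] ℝ,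
    HasFDerivAt (fun x : E => Real.exp (-(ε * ‖x‖)) * inner ℝ v x * (inner ℝ w x / ‖x‖)
      * inner ℝ z x) L x ∧
    ∀ u, L u =
      Real.exp (-(ε * ‖x‖)) * inner ℝ v x * (inner ℝ w x / ‖x‖) * inner ℝ z u
      + Real.exp (-(ε * ‖x‖)) * inner ℝ v x * (inner ℝ z x / ‖x‖) * inner ℝ w u
      + Real.exp (-(ε * ‖x‖)) * inner ℝ w x * (inner ℝ z x / ‖x‖) * inner ℝ v u
      - ε * (Real.exp (-(ε * ‖x‖)) * inner ℝ v x * (inner ℝ w x / ‖x‖) * (inner ℝ z x)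
        * (inner ℝ u x / ‖x‖))
      - Real.exp (-(ε * ‖x‖)) * inner ℝ v x * (inner ℝ w x / ‖x‖) * (inner ℝ z x / ‖x‖)
        * (inner ℝ u x / ‖x‖) := by
  by_cases hx : x = 0
  · subst hx
    exact ⟨_, matern_zero _ (matern_cN ε v w) z, by simp⟩
  · have h := (((matern_exp ε x hx).1.mul (innerSL ℝ v).hasFDerivAt).mul
      ((innerSL ℝ w).hasFDerivAt.mul (matern_exp ε x hx).2)).mul (innerSL ℝ z).hasFDerivAt
    refine ⟨_, h, fun u => ?_⟩
    simp [real_inner_comm u x]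
    ring

variable [FiniteDimensional ℝ E]

theorem matern_sQ (ε : ℝ) (v : E) :
    ContDiff ℝ 1 (fun x : E => Real.exp (-(ε * ‖x‖)) * inner ℝ v x) := by
  refine matern_step 0 _ _ (matern_dQ ε v) fun u => ?_
  refine contDiff_zero.2 (Continuous.sub (by fun_prop) ?_)
  exact continuous_const.mul (matern_cN ε v u)

theorem matern_sR (ε : ℝ) (v w z : E) :
    ContDiff ℝ 1 (fun x : E => Real.exp (-(ε * ‖x‖)) * inner ℝ v x * (inner ℝ w x / ‖x‖)
      * inner ℝ z x) := by
  refine matern_step 0 _ _ (matern_dR ε v w z) fun u => ?_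
  have h1 := matern_cN ε v w
  have h2 := matern_cN ε v z
  have h3 := matern_cN ε w z
  have h4 := matern_div _ (h1.mul (by fun_prop : Continuous fun x : E => inner ℝ z x))
    (by simp) u
  have h5 := matern_div _ (matern_div _ h1 (by simp) z) (by simp) u
  exact contDiff_zero.2 (((((h1.mul continuous_const).add (h2.mul continuous_const)).add
    (h3.mul continuous_const)).sub (continuous_const.mul h4)).sub h5)

theorem matern_sS (ε : ℝ) (v w : E) :
    ContDiff ℝ 2 (fun x : E => Real.exp (-(ε * ‖x‖)) * inner ℝ v x * inner ℝ w x) := by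
  refine matern_step 1 _ (fun u x => Real.exp (-(ε * ‖x‖)) * inner ℝ v x * inner ℝ w u
    + Real.exp (-(ε * ‖x‖)) * inner ℝ w x * inner ℝ v u
    - ε * (Real.exp (-(ε * ‖x‖)) * inner ℝ v x * (inner ℝ u x / ‖x‖) * inner ℝ w x))
    (fun x => ?_) fun u => ?_
  · obtain ⟨L, hL, h⟩ := matern_dQ ε v x
    refine ⟨_, hL.mul (innerSL ℝ w).hasFDerivAt, fun u => ?_⟩
    simp [h]
    ring
  · exact (((matern_sQ ε v).mul contDiff_const).add ((matern_sQ ε w).mul contDiff_const)).sub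
      (contDiff_const.mul (matern_sR ε v u w))

theorem matern_d1 (ε : ℝ) (x : E) :
    HasFDerivAt (fun x : E => Real.exp (-(ε * ‖x‖)) * (1 + ε * ‖x‖))
      ((-ε ^ 2 * Real.exp (-(ε * ‖x‖))) • innerSL ℝ x) x := by
  refine matern_rad (fun r => Real.exp (-(ε * r)) * (1 + ε * r))
    (fun r => -ε ^ 2 * Real.exp (-(ε * r))) (fun r => ?_) x
  have h1 : HasDerivAt (fun r => ε * r) ε r := by simpa using (hasDerivAt_id r).const_mul ε
  refine (h1.neg.exp.mul (h1.const_add 1)).congr_deriv ?_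
  simp only [Pi.neg_apply]
  ring

theorem matern_d0 (ε : ℝ) (x : E) :
    HasFDerivAt (fun x : E => Real.exp (-(ε * ‖x‖)) * (3 + 3 * (ε * ‖x‖) + (ε * ‖x‖) ^ 2))
      ((-ε ^ 2 * (Real.exp (-(ε * ‖x‖)) * (1 + ε * ‖x‖))) • innerSL ℝ x) x := by
  refine matern_rad (fun r => Real.exp (-(ε * r)) * (3 + 3 * (ε * r) + (ε * r) ^ 2))
    (fun r => -ε ^ 2 * (Real.exp (-(ε * r)) * (1 + ε * r))) (fun r => ?_) x
  have h1 : HasDerivAt (fun r => ε * r) ε r := by simpa using (hasDerivAt_id r).const_mul ε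
  refine (h1.neg.exp.mul (((h1.const_mul 3).const_add 3).add (h1.pow 2))).congr_deriv ?_
  simp
  ring

theorem matern_s1 (ε : ℝ) :
    ContDiff ℝ 2 (fun x : E => Real.exp (-(ε * ‖x‖)) * (1 + ε * ‖x‖)) := by
  refine matern_step 1 _ (fun u x => -ε ^ 2 * (Real.exp (-(ε * ‖x‖)) * inner ℝ u x))
    (fun x => ⟨_, matern_d1 ε x, fun u => ?_⟩) fun u => ?_
  · simp [real_inner_comm u x]
    ring
  · exact contDiff_const.mul (matern_sQ ε u)

theorem matern_sT (ε : ℝ) (v : E) :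
    ContDiff ℝ 3 (fun x : E => Real.exp (-(ε * ‖x‖)) * (1 + ε * ‖x‖) * inner ℝ v x) := by
  refine matern_step 2 _ (fun u x => Real.exp (-(ε * ‖x‖)) * (1 + ε * ‖x‖) * inner ℝ v u
    - ε ^ 2 * (Real.exp (-(ε * ‖x‖)) * inner ℝ v x * inner ℝ u x))
    (fun x => ⟨_, (matern_d1 ε x).mul (innerSL ℝ v).hasFDerivAt, fun u => ?_⟩) fun u => ?_
  · simp [real_inner_comm u x]
    ring
  · exact ((matern_s1 ε).mul contDiff_const).sub (contDiff_const.mul (matern_sS ε v u))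

theorem matern_s0 (ε : ℝ) :
    ContDiff ℝ 4 (fun x : E =>
      Real.exp (-(ε * ‖x‖)) * (3 + 3 * (ε * ‖x‖) + (ε * ‖x‖) ^ 2)) := by
  refine matern_step 3 _
    (fun u x => -ε ^ 2 * (Real.exp (-(ε * ‖x‖)) * (1 + ε * ‖x‖) * inner ℝ u x))
    (fun x => ⟨_, matern_d0 ε x, fun u => ?_⟩) fun u => ?_
  · simp [real_inner_comm u x]
    ring
  · exact contDiff_const.mul (matern_sT ε u)

end

/-- The `C⁴` Matérn kernel profile `x ↦ e^{−ε‖x‖}(3 + 3ε‖x‖ + (ε‖x‖)²)`,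
with `‖·‖` the Euclidean norm on `ℝᵈ`, is four times continuously differentiable
on all of `ℝᵈ` (including at the origin). -/
theorem matern_C4_smooth (d : ℕ) (hd : 1 ≤ d) (ε : ℝ) (hε : 0 < ε) :
    ContDiff ℝ 4 (fun x : EuclideanSpace ℝ (Fin d) =>
      Real.exp (-(ε * ‖x‖)) * (3 + 3 * (ε * ‖x‖) + (ε * ‖x‖) ^ 2)) := by
  exact matern_s0 ε
end

section
/- Let c = (c₁, c₂) ∈ ℝ², α > 0, and for x ∈ ℝ² with x ≠ c set r = ‖x − c‖₂ and define the velocity field u(x) = (u₁(x), u₂(x)) by u₁(x) = −(x₂ − c₂) · 4e^{−r^α} and u₂(x) = (x₁ − c₁) · 4e^{−r^α}. Then for all x ≠ c: (i) the field is divergence-free, ∂₁u₁(x) + ∂₂u₂(x) = 0; and (ii) its scalar vorticity is ∂₁u₂(x) − ∂₂u₁(x) = (8 − 4α r^α) e^{−r^α}. -/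
/-- Partial derivative of `f : ℝ² → ℝ` (Euclidean) in the `i`-th coordinate direction. -/
noncomputable def pdE (i : Fin 2) (f : EuclideanSpace ℝ (Fin 2) → ℝ)
    (x : EuclideanSpace ℝ (Fin 2)) : ℝ :=
  fderiv ℝ f x (EuclideanSpace.single i 1)

/-- The planar vortex field `u₁ = −(x₂−c₂)·4e^{−r^α}`, `u₂ = (x₁−c₁)·4e^{−r^α}`
with `r = ‖x−c‖₂` is divergence-free away from the center, and its scalar vorticity
is `∂₁u₂ − ∂₂u₁ = (8 − 4α r^α) e^{−r^α}`. -/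
theorem vortex_divfree_and_vorticity
    (c : EuclideanSpace ℝ (Fin 2)) (α : ℝ) (hα : 0 < α)
    (u1 u2 : EuclideanSpace ℝ (Fin 2) → ℝ)
    (hu1 : ∀ x, u1 x = -(x 1 - c 1) * (4 * Real.exp (-(‖x - c‖ ^ α))))
    (hu2 : ∀ x, u2 x = (x 0 - c 0) * (4 * Real.exp (-(‖x - c‖ ^ α))))
    (x : EuclideanSpace ℝ (Fin 2)) (hx : x ≠ c) :
    pdE 0 u1 x + pdE 1 u2 x = 0 ∧
    pdE 0 u2 x - pdE 1 u1 x
      = (8 - 4 * α * ‖x - c‖ ^ α) * Real.exp (-(‖x - c‖ ^ α)) := by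
  have hR : ∀ y : EuclideanSpace ℝ (Fin 2),
      ‖y - c‖ ^ α = ((y 0 - c 0) ^ 2 + (y 1 - c 1) ^ 2) ^ (α / 2) := by
    intro y
    have h : (y 0 - c 0) ^ 2 + (y 1 - c 1) ^ 2 = ‖y - c‖ ^ 2 := by
      rw [EuclideanSpace.norm_sq_eq]; simp [Fin.sum_univ_two]
    rw [h, ← Real.rpow_natCast, ← Real.rpow_mul (norm_nonneg _)]
    congr 1
    push_cast; ring
  have hpos : 0 < (x 0 - c 0) ^ 2 + (x 1 - c 1) ^ 2 := by
    have h : (x 0 - c 0) ^ 2 + (x 1 - c 1) ^ 2 = ‖x - c‖ ^ 2 := by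
      rw [EuclideanSpace.norm_sq_eq]; simp [Fin.sum_univ_two]
    rw [h]
    have := norm_pos_iff.mpr (sub_ne_zero.mpr hx)
    positivity
  have e1 : u1 = fun y => -(y 1 - c 1) *
      (4 * Real.exp (-(((y 0 - c 0) ^ 2 + (y 1 - c 1) ^ 2) ^ (α / 2)))) := by
    funext y; rw [hu1, hR]
  have e2 : u2 = fun y => (y 0 - c 0) *
      (4 * Real.exp (-(((y 0 - c 0) ^ 2 + (y 1 - c 1) ^ 2) ^ (α / 2)))) := by
    funext y; rw [hu2, hR]
  rw [hR x]
  have d : ∀ i : Fin 2, HasFDerivAt (fun y : EuclideanSpace ℝ (Fin 2) => y i - c i)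
      (EuclideanSpace.proj i : EuclideanSpace ℝ (Fin 2) →L[ℝ] ℝ) x := fun i =>
    ((EuclideanSpace.proj i : EuclideanSpace ℝ (Fin 2) →L[ℝ] ℝ).hasFDerivAt).sub_const (c i)
  have hS := ((d 0).pow 2).add ((d 1).pow 2)
  have hG := ((hS.rpow_const (p := α / 2) (Or.inl hpos.ne')).neg.exp).const_mul 4
  have h1 := (d 1).neg.mul hG
  have h2 := (d 0).mul hG
  have f1 := (h1.congr_of_eventuallyEq (f₁ := u1)
    (Filter.Eventually.of_forall fun y => by rw [e1]; rfl)).fderiv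
  have f2 := (h2.congr_of_eventuallyEq (f₁ := u2)
    (Filter.Eventually.of_forall fun y => by rw [e2]; rfl)).fderiv
  have hp : ((x 0 - c 0) ^ 2 + (x 1 - c 1) ^ 2) ^ (α / 2) =
      ((x 0 - c 0) ^ 2 + (x 1 - c 1) ^ 2) ^ (α / 2 - 1) *
        ((x 0 - c 0) ^ 2 + (x 1 - c 1) ^ 2) := by
    rw [← Real.rpow_add_one hpos.ne']; congr 1; ring
  unfold pdE
  rw [f1, f2]
  clear f1 f2 h1 h2 hG hS d
  simp
  generalize Real.exp (-(((x 0 - c 0) ^ 2 + (x 1 - c 1) ^ 2) ^ (α / 2))) = E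
  constructor
  · ring
  · rw [hp]; ring
end
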